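/- (Finite regularity.) Under conditions 1–5 of the graded Fréchet inverse function theorem, suppose F extends to a continuous map F̄ : X_{k₀} → Y_{k₀−d₁}. Take y ∈ Y_{k₀+d₂} with ‖y‖_{k₀+d₂} < R/m'_{k₀}. Then there is x ∈ X_{k₀} with ‖x‖_{k₀} < R and F̄(x) = y. -/

import Mathlib

open Filter Topology

/-!
Fix `y` and, for a suitable weight `β`, minimise `x ↦ ∑ k, β k * pY k (F x - y)` by Ekeland's
variational principle, in the complete space `X` metrised by a weighted sum of its seminorms. At a
point `x` with `F x ≠ y`, moving along `L x w`, where `w` is a geometrically bounded approximation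
of `y - F x`, decreases the functional faster than Ekeland's principle allows; so the minimiser
solves `F x = y`. The weights `β` are chosen rapidly decreasing, so that all series converge, except
for `β (k₀ + d₂) ≈ 1`; this bounds the distance travelled in `pX k₀` by `m' k₀` times
`pY (k₀ + d₂) (F x₀ - y)`, up to an arbitrarily small factor. Without smoothness of `y`, write `y`
as a rapidly convergent series of elements of `Y` and correct the solution one term at a time: by
the Lipschitz bound the corrections are summable in the completion of `X`.
-/

open scoped ENNReal NNReal

lemma exp_sub_one_le_mul_exp (x : ℝ) : Real.exp x - 1 ≤ x * Real.exp x := by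
  have : Real.exp x * (1 - x) ≤ 1 := by
    calc Real.exp x * (1 - x) ≤ Real.exp x * Real.exp (-x) := by
          gcongr; exact Real.one_sub_le_exp_neg x
      _ = 1 := by rw [← Real.exp_add, add_neg_cancel, Real.exp_zero]
  linarith

section Seminorm

lemma exists_linearMap_norm_eq_seminorm.{u} {E : Type u} [AddCommGroup E] [Module ℝ E]
    (q : Seminorm ℝ E) :
    ∃ (V : Type u) (_ : NormedAddCommGroup V) (_ : NormedSpace ℝ V) (π : E →ₗ[ℝ] V),
      ∀ x, ‖π x‖ = q x := by
  let _ : SeminormedAddCommGroup E := q.toAddGroupSeminorm.toSeminormedAddCommGroup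
  let _ : NormedSpace ℝ E := { norm_smul_le := fun c x => (map_smul_eq_mul q c x).le }
  exact ⟨SeparationQuotient E, inferInstance, inferInstance,
    (SeparationQuotient.mkCLM ℝ E).toLinearMap, fun x => SeparationQuotient.norm_mk x⟩

variable {E : Type*} [AddCommGroup E] [Module ℝ E]

lemma seminorm_sub_le_of_deriv_le {q : Seminorm ℝ E} {ψ ψ' : ℝ → E} {c A t : ℝ} (hc : 0 < c)
    (ht : 0 ≤ t)
    (hψ : ∀ s ∈ Set.Icc 0 t,
      Tendsto (fun h : ℝ => q (h⁻¹ • (ψ (s + h) - ψ s) - ψ' s)) (𝓝[≠] 0) (𝓝 0))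
    (hψ' : ∀ s ∈ Set.Icc 0 t, q (ψ' s) ≤ c * (A + q (ψ s))) :
    q (ψ t - ψ 0) ≤ (A + q (ψ 0)) * (Real.exp (c * t) - 1) := by
  obtain ⟨V, _, _, π, hπ⟩ := exists_linearMap_norm_eq_seminorm q
  set φ : ℝ → V := fun s => π (ψ s - ψ 0) with hφ
  have hderiv : ∀ s ∈ Set.Icc 0 t, HasDerivAt φ (π (ψ' s)) s := fun s hs => by
    rw [hasDerivAt_iff_tendsto_slope_zero, tendsto_iff_norm_sub_tendsto_zero]
    refine (hψ s hs).congr fun h => ?_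
    rw [hφ, ← map_sub, ← map_smul, ← map_sub, hπ, sub_sub_sub_cancel_right]
  have hbound : ∀ s ∈ Set.Ico 0 t, ‖π (ψ' s)‖ ≤ c * ‖φ s‖ + c * (A + q (ψ 0)) := fun s hs => by
    have htri : q (ψ s) ≤ q (ψ s - ψ 0) + q (ψ 0) := by
      simpa using map_add_le_add q (ψ s - ψ 0) (ψ 0)
    rw [hπ, hπ]
    nlinarith [hψ' s (Set.Ico_subset_Icc_self hs)]
  have hgronwall := norm_le_gronwallBound_of_norm_deriv_right_le (δ := 0)
    (fun s hs => (hderiv s hs).continuousAt.continuousWithinAt)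
    (fun s hs => (hderiv s (Set.Ico_subset_Icc_self hs)).hasDerivWithinAt) (by simp [hφ]) hbound
    t (Set.right_mem_Icc.2 ht)
  rw [hπ, gronwallBound_of_K_ne_0 hc.ne'] at hgronwall
  simpa [mul_div_cancel_left₀ _ hc.ne'] using hgronwall

end Seminorm

section WeightedNorm

variable {E ι : Type*} [AddCommGroup E] [Module ℝ E]

/-- The weighted sum `∑ i, w i * p i x` of a family of seminorms, with value `∞` when
the series diverges; it measures both the residual `F x - y` and the distance travelled in `X`. -/
noncomputable def weightedNorm (w : ι → ℝ≥0) (p : ι → Seminorm ℝ E) (x : E) : ℝ≥0∞ :=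
  ∑' i, w i * ENNReal.ofReal (p i x)

variable {w : ι → ℝ≥0} {p : ι → Seminorm ℝ E}

@[simp]
lemma weightedNorm_zero : weightedNorm w p 0 = 0 := by simp [weightedNorm]

lemma weightedNorm_sub_rev (x y : E) : weightedNorm w p (x - y) = weightedNorm w p (y - x) := by
  simp only [weightedNorm, map_sub_rev _ x y]

lemma weightedNorm_add_le (x y : E) :
    weightedNorm w p (x + y) ≤ weightedNorm w p x + weightedNorm w p y := by
  simp only [weightedNorm, ← ENNReal.tsum_add, ← mul_add]
  gcongr with i
  exact (ENNReal.ofReal_le_ofReal (map_add_le_add _ _ _)).trans ENNReal.ofReal_add_le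

lemma weightedNorm_sub_le_add (x y z : E) :
    weightedNorm w p (x - z) ≤ weightedNorm w p (x - y) + weightedNorm w p (y - z) := by
  simpa using weightedNorm_add_le (w := w) (p := p) (x - y) (y - z)

lemma weightedNorm_smul (c : ℝ) (x : E) :
    weightedNorm w p (c • x) = ENNReal.ofReal |c| * weightedNorm w p x := by
  simp only [weightedNorm, ← ENNReal.tsum_mul_left, map_smul_eq_mul, Real.norm_eq_abs,
    ENNReal.ofReal_mul (abs_nonneg c), mul_left_comm]

lemma weightedNorm_add_weight (w w' : ι → ℝ≥0) (x : E) :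
    weightedNorm (w + w') p x = weightedNorm w p x + weightedNorm w' p x := by
  simp only [weightedNorm, Pi.add_apply, ENNReal.coe_add, add_mul, ENNReal.tsum_add]

lemma weightedNorm_single [DecidableEq ι] (i : ι) (x : E) :
    weightedNorm (Pi.single i 1) p x = ENNReal.ofReal (p i x) := by
  rw [weightedNorm, tsum_eq_single i fun i' hi' => by simp [hi']]
  simp

lemma seminorm_lt_of_weightedNorm_lt {i : ι} {x : E} {A r : ℝ} (hA : A ≤ w i * r)
    (hx : weightedNorm w p x < ENNReal.ofReal A) : p i x < r := by
  by_contra! hr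
  refine hx.not_ge ?_
  calc ENNReal.ofReal A ≤ ENNReal.ofReal (w i * p i x) := by
        gcongr; exact hA.trans (by gcongr)
    _ = w i * ENNReal.ofReal (p i x) := by
        rw [ENNReal.ofReal_mul (w i).coe_nonneg, ENNReal.ofReal_coe_nnreal]
    _ ≤ weightedNorm w p x := ENNReal.le_tsum i

lemma weightedNorm_le_of_tendsto {l : Filter ℕ} [l.NeBot] {u : ℕ → E} {x : E} {r : ℝ≥0∞}
    (hu : ∀ i, Tendsto (fun n => p i (u n)) l (𝓝 (p i x)))
    (hr : ∀ᶠ n in l, weightedNorm w p (u n) ≤ r) : weightedNorm w p x ≤ r := by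
  rw [weightedNorm, ENNReal.tsum_eq_iSup_sum]
  refine iSup_le fun s => le_of_tendsto (tendsto_finsetSum s fun i _ => ?_)
    (hr.mono fun n hn => (ENNReal.sum_le_tsum s).trans hn)
  exact ENNReal.Tendsto.const_mul (ENNReal.tendsto_ofReal (hu i)) (.inr ENNReal.coe_ne_top)

lemma seminorm_eq_zero_of_weightedNorm_eq_zero (hw : ∀ i, 0 < w i) {x : E}
    (hx : weightedNorm w p x = 0) (i : ι) : p i x = 0 := by
  have := ENNReal.tsum_eq_zero.1 hx i
  simp only [mul_eq_zero, ENNReal.coe_eq_zero, (hw i).ne', false_or, ENNReal.ofReal_eq_zero] at this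
  exact this.antisymm (apply_nonneg _ _)

lemma tendsto_weightedNorm_zero [Countable ι] {α : Type*} {l : Filter α} [l.IsCountablyGenerated]
    {u : α → E} (g : ι → ℝ≥0∞) (hg : ∑' i, w i * g i ≠ ∞)
    (hug : ∀ᶠ a in l, ∀ i, ENNReal.ofReal (p i (u a)) ≤ g i)
    (hu : ∀ i, Tendsto (fun a => p i (u a)) l (𝓝 0)) :
    Tendsto (fun a => weightedNorm w p (u a)) l (𝓝 0) := by
  let _ : MeasurableSpace ι := ⊤
  have hlim := MeasureTheory.tendsto_lintegral_filter_of_dominated_convergence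
    (μ := MeasureTheory.Measure.count) (F := fun a i => w i * ENNReal.ofReal (p i (u a)))
    (f := 0) (fun i => w i * g i) (.of_forall fun _ => .of_discrete)
    (hug.mono fun a ha => .of_forall fun i => by gcongr; exact ha i)
    (by rwa [MeasureTheory.lintegral_count])
    (.of_forall fun i => by
      simpa using ENNReal.Tendsto.const_mul (ENNReal.tendsto_ofReal (hu i))
        (.inr ENNReal.coe_ne_top))
  simpa [MeasureTheory.lintegral_count, weightedNorm] using hlim

lemma exists_pos_tsum_mul_lt_and_tsum_mul_pow_ne_top (W : ℕ → ℝ≥0∞) (hW : ∀ k, W k ≠ ∞)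
    {δ : ℝ≥0∞} (hδ : δ ≠ 0) :
    ∃ γ : ℕ → ℝ≥0, (∀ k, 0 < γ k) ∧ ∑' k, γ k * W k < δ ∧
      ∀ c : ℝ≥0, ∑' k, γ k * (W k * c ^ k) ≠ ∞ := by
  obtain ⟨γ, hγ, hsum⟩ := ENNReal.exists_pos_tsum_mul_lt_of_countable
    (lt_min hδ.bot_lt one_pos).ne' (fun k => W k * k.factorial)
    fun k => ENNReal.mul_ne_top (hW k) (by finiteness)
  -- The factor `k!` in the bounded terms `W k * k! * γ k` absorbs every geometric growth.
  have hone_le (k : ℕ) : (1 : ℝ≥0∞) ≤ k.factorial := by exact_mod_cast k.factorial_pos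
  refine ⟨γ, hγ, lt_of_le_of_lt ?_ (hsum.trans_le (min_le_left _ _)), fun c => ?_⟩
  · refine ENNReal.tsum_le_tsum fun k => ?_
    rw [mul_comm (W k * _)]
    gcongr
    exact le_mul_of_one_le_right' (hone_le k)
  · have hexp : ∑' k : ℕ, ENNReal.ofReal ((c : ℝ) ^ k / k.factorial) ≠ ∞ :=
      (Real.summable_pow_div_factorial c).tsum_ofReal_ne_top
    refine ne_top_of_le_ne_top hexp (ENNReal.tsum_le_tsum fun k => ?_)
    have hterm : W k * k.factorial * γ k ≤ 1 :=
      (ENNReal.le_tsum k).trans (hsum.le.trans (min_le_right _ _))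
    calc (γ k : ℝ≥0∞) * (W k * c ^ k)
        = W k * k.factorial * γ k * (c ^ k / k.factorial) := by
          rw [mul_right_comm, mul_assoc (W k),
            ENNReal.mul_div_cancel (by positivity) (by finiteness)]
          ring
      _ ≤ 1 * (c ^ k / k.factorial) := by gcongr
      _ = ENNReal.ofReal ((c : ℝ) ^ k / k.factorial) := by
        rw [one_mul, ENNReal.ofReal_div_of_pos (by positivity), ENNReal.ofReal_pow c.coe_nonneg,
          ENNReal.ofReal_coe_nnreal, ENNReal.ofReal_natCast]

lemma exists_pos_weightedNorm_lt (p : ℕ → Seminorm ℝ E) (l : ℕ) (v y : E) {b : ℕ → ℝ≥0∞}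
    (hb : ∀ k, b k ≠ ∞) {A : ℝ} (hA : p l v < A) :
    ∃ β : ℕ → ℝ≥0, (∀ k, 0 < β k) ∧ 1 ≤ β l ∧ weightedNorm β p v < ENNReal.ofReal A ∧
      weightedNorm β p y ≠ ∞ ∧ ∀ c : ℝ≥0, ∑' k, β k * (b k * c ^ k) ≠ ∞ := by
  obtain ⟨γ, hγ₀, hγ, hγexp⟩ := exists_pos_tsum_mul_lt_and_tsum_mul_pow_ne_top
    (fun k => ENNReal.ofReal (p k v) + ENNReal.ofReal (p k y) + b k)
    (fun k => by finiteness [hb k]) (δ := ENNReal.ofReal (A - p l v)) (by simpa using hA)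
  have hγv : weightedNorm γ p v < ENNReal.ofReal (A - p l v) :=
    (ENNReal.tsum_le_tsum fun k => by gcongr; exact le_self_add.trans le_self_add).trans_lt hγ
  have hγy : weightedNorm γ p y ≤ ENNReal.ofReal (A - p l v) :=
    (ENNReal.tsum_le_tsum fun k => by gcongr; exact le_add_self.trans le_self_add).trans hγ.le
  refine ⟨Pi.single l 1 + γ, fun k => add_pos_of_nonneg_of_pos (by positivity) (hγ₀ k), by simp,
    ?_, ?_, fun c => ?_⟩
  · rw [weightedNorm_add_weight, weightedNorm_single]
    calc ENNReal.ofReal (p l v) + weightedNorm γ p v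
        < ENNReal.ofReal (p l v) + ENNReal.ofReal (A - p l v) := by gcongr; finiteness
      _ = ENNReal.ofReal A := by
        rw [← ENNReal.ofReal_add (apply_nonneg _ _) (by linarith), add_sub_cancel]
  · rw [weightedNorm_add_weight, weightedNorm_single]
    exact ENNReal.add_ne_top.2
      ⟨ENNReal.ofReal_ne_top, ne_top_of_le_ne_top ENNReal.ofReal_ne_top hγy⟩
  · have hγb : ∑' k, γ k * (b k * c ^ k) ≠ ∞ :=
      ne_top_of_le_ne_top (hγexp c) (ENNReal.tsum_le_tsum fun k => by gcongr; exact le_add_self)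
    simp only [Pi.add_apply, ENNReal.coe_add, add_mul, ENNReal.tsum_add]
    rw [tsum_eq_single l fun k hk => by simp [hk]]
    simpa using ⟨by finiteness [hb l], hγb⟩

end WeightedNorm

section Variational

-- The ordering principle of Brezis and Browder.
theorem exists_forall_le_of_antitone_bddBelow {T : Type*} [Preorder T] {f : T → ℝ≥0∞}
    (hf : Monotone f) (x₀ : T)
    (hT : ∀ u : ℕ → T, u 0 = x₀ → Antitone u → BddBelow (Set.range u)) :
    ∃ x ≤ x₀, ∀ z ≤ x, f x ≤ f z := by
  have hstep : ∀ (n : ℕ) (x : T), ∃ s ≤ x, ∀ w ≤ x, f s ≤ f w + ((n : ℝ≥0∞) + 1)⁻¹ := by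
    intro n x
    by_cases hx : ∀ w ≤ x, f w = ∞
    · exact ⟨x, le_rfl, fun w hw => by simp [hx w hw]⟩
    push Not at hx
    obtain ⟨w₀, hw₀, hfw₀⟩ := hx
    have hinf : ⨅ w : Set.Iic x, f w ≠ ∞ :=
      ne_top_of_le_ne_top hfw₀ (iInf_le (fun w : Set.Iic x => f w) ⟨w₀, hw₀⟩)
    obtain ⟨s, hs⟩ := iInf_lt_iff.1 (ENNReal.lt_add_right hinf
      (ENNReal.inv_ne_zero.2 (by finiteness : (n : ℝ≥0∞) + 1 ≠ ∞)))
    refine ⟨s, s.2, fun w hw => hs.le.trans ?_⟩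
    gcongr
    exact iInf_le (fun w : Set.Iic x => f w) ⟨w, hw⟩
  choose s hsle hs using hstep
  let u : ℕ → T := fun n => Nat.rec x₀ s n
  obtain ⟨z, hz⟩ := hT u rfl (antitone_nat_of_succ_le fun n => hsle n (u n))
  have hzu : ∀ n, z ≤ u n := fun n => hz ⟨n, rfl⟩
  refine ⟨z, hzu 0, fun w hw => ?_⟩
  have hlim : Tendsto (fun n : ℕ => f w + ((n : ℝ≥0∞) + 1)⁻¹) atTop (𝓝 (f w)) := by
    simpa using ((tendsto_add_atTop_iff_nat 1).2 ENNReal.tendsto_inv_nat_nhds_zero).const_add (f w)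
  exact ge_of_tendsto' hlim fun n => (hf (hzu (n + 1))).trans (hs n (u n) w (hw.trans (hzu n)))

end Variational

section Ekeland

variable {E ι : Type*} [AddCommGroup E] [Module ℝ E]

/-- Convergence of a sequence in the topology generated by the seminorms `p`. -/
def ConvergesTo (p : ι → Seminorm ℝ E) (u : ℕ → E) (x : E) : Prop :=
  ∀ i, Tendsto (fun n => p i (u n - x)) atTop (𝓝 0)

lemma ConvergesTo.tendsto_sub {p : ι → Seminorm ℝ E} {u : ℕ → E} {x : E} (h : ConvergesTo p u x)
    (a : E) (i : ι) : Tendsto (fun n => p i (u n - a)) atTop (𝓝 (p i (x - a))) := by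
  rw [tendsto_iff_norm_sub_tendsto_zero]
  refine squeeze_zero (fun _ => norm_nonneg _) (fun n => ?_) (h i)
  simpa using abs_sub_map_le_sub (p i) (u n - a) (x - a)

/-- Every sequence that is Cauchy for each of the seminorms `p` converges; for countable families
this is completeness of the generated topology. -/
def IsSeqComplete (p : ι → Seminorm ℝ E) : Prop :=
  ∀ u : ℕ → E, (∀ i, ∀ ε > (0 : ℝ), ∃ N, ∀ a ≥ N, ∀ b ≥ N, p i (u a - u b) < ε) →
    ∃ x, ConvergesTo p u x

variable {p : ι → Seminorm ℝ E} {w : ι → ℝ≥0} {f : E → ℝ≥0∞}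

/-- The order of Ekeland's variational principle: `z ≤ x` when passing from `x` to `z` decreases `f`
by at least the weighted length of the step. It is only a preorder, as `weightedNorm w p` need not
separate points and `f` may be infinite. -/
abbrev ekelandPreorder (w : ι → ℝ≥0) (p : ι → Seminorm ℝ E) (f : E → ℝ≥0∞) : Preorder E where
  le z x := f z + weightedNorm w p (z - x) ≤ f x
  le_refl x := by simp
  le_trans x y z hxy hyz := by
    calc f x + weightedNorm w p (x - z)
        ≤ f x + (weightedNorm w p (x - y) + weightedNorm w p (y - z)) := by
          gcongr; exact weightedNorm_sub_le_add x y z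
      _ = f x + weightedNorm w p (x - y) + weightedNorm w p (y - z) := (add_assoc _ _ _).symm
      _ ≤ f y + weightedNorm w p (y - z) := by gcongr
      _ ≤ f z := hyz

lemma exists_convergesTo_of_weightedNorm_sub_le (hp : IsSeqComplete p) (hw : ∀ i, 0 < w i)
    {u : ℕ → E} (hu₀ : f (u 0) ≠ ∞)
    (hu : ∀ n m, n ≤ m → f (u m) + weightedNorm w p (u m - u n) ≤ f (u n)) :
    ∃ x, ConvergesTo p u x := by
  refine hp u fun i ε hε => ?_
  set δ : ℝ≥0∞ := ENNReal.ofReal (w i * (ε / 2))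
  have hδ : δ ≠ 0 := by simp [δ, (hw i).ne', hε]
  have hinf : ⨅ n, f (u n) ≠ ∞ := ne_top_of_le_ne_top hu₀ (iInf_le _ 0)
  obtain ⟨N, hN⟩ := iInf_lt_iff.1 (ENNReal.lt_add_right hinf hδ)
  have hclose : ∀ n ≥ N, p i (u n - u N) < ε / 2 := fun n hn => by
    have hlt : f (u n) + weightedNorm w p (u n - u N) < f (u n) + δ :=
      ((hu N n hn).trans_lt hN).trans_le (by gcongr; exact iInf_le _ n)
    exact seminorm_lt_of_weightedNorm_lt le_rfl (lt_of_add_lt_add_left hlt)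
  refine ⟨N, fun a ha b hb => ?_⟩
  calc p i (u a - u b) ≤ p i (u a - u N) + p i (u b - u N) := by
        simpa using map_sub_le_add (p i) (u a - u N) (u b - u N)
    _ < ε := by linarith [hclose a ha, hclose b hb]

theorem exists_ekeland_point (hp : IsSeqComplete p) (hw : ∀ i, 0 < w i) {x₀ : E}
    (hx₀ : f x₀ ≠ ∞)
    (hf : ∀ (u : ℕ → E) (x : E) (r : ℝ≥0∞), (∀ n, f (u n) + weightedNorm w p (u n - x₀) ≤ f x₀) →
      ConvergesTo p u x → (∀ᶠ n in atTop, f (u n) ≤ r) → f x ≤ r) :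
    ∃ x, f x + weightedNorm w p (x - x₀) ≤ f x₀ ∧
      ∀ z, f z + weightedNorm w p (z - x) ≤ f x → f x ≤ f z := by
  let _ : Preorder E := ekelandPreorder w p f
  have hmono : Monotone f := fun z x (hzx : f z + _ ≤ f x) => le_self_add.trans hzx
  refine exists_forall_le_of_antitone_bddBelow hmono x₀ fun u hu₀ hu => ?_
  obtain ⟨x, hx⟩ := exists_convergesTo_of_weightedNorm_sub_le (f := f) hp hw (by rwa [hu₀])
    fun n m hnm => hu hnm
  have hle_x₀ : ∀ n, f (u n) + weightedNorm w p (u n - x₀) ≤ f x₀ := fun n =>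
    hu₀ ▸ hu (Nat.zero_le n)
  have hfx : ∀ n, f x ≤ f (u n) := fun n => hf u x _ hle_x₀ hx <|
    (eventually_ge_atTop n).mono fun m hnm => hmono (hu hnm)
  have hfx_top : f x ≠ ∞ := ne_top_of_le_ne_top (by rwa [hu₀]) (hfx 0)
  refine ⟨x, Set.forall_mem_range.2 fun n => ?_⟩
  have hdist : weightedNorm w p (x - u n) ≤ f (u n) - f x := by
    refine weightedNorm_le_of_tendsto (hx.tendsto_sub (u n)) ?_
    filter_upwards [eventually_ge_atTop n] with m hnm
    refine ENNReal.le_sub_of_add_le_left hfx_top ?_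
    exact (add_le_add_left (hfx m) _).trans (hu hnm)
  calc f x + weightedNorm w p (x - u n) ≤ f x + (f (u n) - f x) := by gcongr
    _ = f (u n) := add_tsub_cancel_of_le (hfx n)

end Ekeland

section Standard

variable {E : Type*} [AddCommGroup E] [Module ℝ E]

/-- A graded space is standard when each `v` is a limit of vectors whose `k`-th seminorms grow at
most geometrically in `k` and are dominated by a fixed multiple of those of `v`. -/
def IsStandard (p : ℕ → Seminorm ℝ E) : Prop :=
  ∀ v : E, ∃ c₃ : ℝ, ∃ vs : ℕ → E, ConvergesTo p vs v ∧ (∀ n k, p k (vs n) ≤ c₃ * p k v) ∧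
    ∀ n, ∃ c₀ : ℝ, 0 < c₀ ∧ ∀ k, p k (vs n) ≤ c₀ ^ k

lemma IsStandard.exists_weightedNorm_sub_lt {p : ℕ → Seminorm ℝ E} (hp : IsStandard p)
    {w : ℕ → ℝ≥0} {v : E} (hv : weightedNorm w p v ≠ ∞) {δ : ℝ≥0∞} (hδ : δ ≠ 0) :
    ∃ v', weightedNorm w p (v' - v) < δ ∧ ∃ c₀ : ℝ, 0 < c₀ ∧ ∀ k, p k v' ≤ c₀ ^ k := by
  obtain ⟨c₃, vs, hlim, hle, hgeom⟩ := hp v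
  have hlim' : Tendsto (fun n => weightedNorm w p (vs n - v)) atTop (𝓝 0) := by
    refine tendsto_weightedNorm_zero (fun k => ENNReal.ofReal (c₃ + 1) * ENNReal.ofReal (p k v))
      ?_ (.of_forall fun n k => ?_) hlim
    · simp only [mul_left_comm _ (ENNReal.ofReal (c₃ + 1)), ENNReal.tsum_mul_left]
      exact ENNReal.mul_ne_top ENNReal.ofReal_ne_top hv
    · rw [← ENNReal.ofReal_mul' (apply_nonneg _ _)]
      refine ENNReal.ofReal_le_ofReal ((map_sub_le_add (p k) _ _).trans ?_)
      linarith [hle n k]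
  obtain ⟨n, hn⟩ := (hlim'.eventually_lt_const hδ.bot_lt).exists
  exact ⟨vs n, hn, hgeom n⟩

end Standard

section TameRightInverse

variable {X Y : Type*} [AddCommGroup X] [Module ℝ X] [AddCommGroup Y] [Module ℝ Y]

/-- The hypotheses of the inverse function theorem on the ball `pX k₀ x < R`: `F` is sequentially
continuous and Gâteaux differentiable with tame derivative `DF`, and `L` is a tame right inverse
of `DF`. The losses of derivatives are `d₁` and `d₂`. -/
structure HasTameRightInverse (pX : ℕ → Seminorm ℝ X) (pY : ℕ → Seminorm ℝ Y) (k₀ d₁ d₂ : ℕ)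
    (R : ℝ) (m m' : ℕ → ℝ) (F : X → Y) (DF : X → X → Y) (L : X → Y → X) : Prop where
  continuous : ∀ x, pX k₀ x < R → ∀ xs : ℕ → X, (∀ j, pX k₀ (xs j) < R) →
    ConvergesTo pX xs x → ConvergesTo pY (fun j => F (xs j)) (F x)
  gateaux : ∀ x, pX k₀ x < R → ∀ u k,
    Tendsto (fun t : ℝ => pY k (t⁻¹ • (F (x + t • u) - F x) - DF x u)) (𝓝[≠] 0) (𝓝 0)
  tame : ∀ u, ∃ c : ℝ, 0 < c ∧ ∀ x, pX k₀ x < R → ∀ k,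
    pY k (DF x u) ≤ c * (m k * pX (k + d₁) u + pY k (F x))
  right_inverse : ∀ x, pX k₀ x < R → ∀ v, DF x (L x v) = v
  pos : ∀ k, 0 < m' k
  bound : ∀ x, pX k₀ x < R → ∀ v k, pX k (L x v) ≤ m' k * pY (k + d₂) v

namespace HasTameRightInverse

variable {pX : ℕ → Seminorm ℝ X} {pY : ℕ → Seminorm ℝ Y} {k₀ d₁ d₂ : ℕ} {R : ℝ} {m m' : ℕ → ℝ}
  {F : X → Y} {DF : X → X → Y} {L : X → Y → X} {x : X}

lemma seminorm_map_sub_le (H : HasTameRightInverse pX pY k₀ d₁ d₂ R m m' F DF L) {u : X} {c t : ℝ}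
    (hc : 0 < c) (ht : 0 ≤ t) (hball : ∀ s ∈ Set.Icc 0 t, pX k₀ (x + s • u) < R)
    (htame : ∀ x, pX k₀ x < R → ∀ k, pY k (DF x u) ≤ c * (m k * pX (k + d₁) u + pY k (F x)))
    (k : ℕ) :
    pY k (F (x + t • u) - F x) ≤ (m k * pX (k + d₁) u + pY k (F x)) * (Real.exp (c * t) - 1) := by
  have hderiv : ∀ s ∈ Set.Icc 0 t, Tendsto (fun h : ℝ =>
      pY k (h⁻¹ • (F (x + (s + h) • u) - F (x + s • u)) - DF (x + s • u) u)) (𝓝[≠] 0) (𝓝 0) := by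
    intro s hs
    simpa only [add_smul, add_assoc] using H.gateaux _ (hball s hs) u k
  simpa using seminorm_sub_le_of_deriv_le (ψ := fun s => F (x + s • u)) hc ht hderiv
    fun s hs => htame _ (hball s hs) k

lemma exists_slope_bound (H : HasTameRightInverse pX pY k₀ d₁ d₂ R m m' F DF L)
    (hx : pX k₀ x < R) (u : X) :
    ∃ C : ℝ, 0 ≤ C ∧ ∀ᶠ t in 𝓝[>] (0 : ℝ), ∀ k, pY k (t⁻¹ • (F (x + t • u) - F x) - DF x u) ≤
      C * (m k * pX (k + d₁) u + pY k (F x)) := by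
  obtain ⟨c, hc, htame⟩ := H.tame u
  have hnear : ∀ᶠ t in 𝓝 (0 : ℝ), pX k₀ x + t * pX k₀ u < R := by
    have : Tendsto (fun t : ℝ => pX k₀ x + t * pX k₀ u) (𝓝 0) (𝓝 (pX k₀ x)) :=
      Continuous.tendsto' (by fun_prop) _ _ (by simp)
    exact this.eventually_lt_const hx
  refine ⟨c * Real.exp c + c, by positivity, ?_⟩
  filter_upwards [self_mem_nhdsWithin, nhdsWithin_le_nhds hnear,
    nhdsWithin_le_nhds (Iio_mem_nhds zero_lt_one)] with t (ht : 0 < t) htR (ht1 : t < 1) k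
  have hball : ∀ s ∈ Set.Icc 0 t, pX k₀ (x + s • u) < R := fun s hs => by
    have := map_add_le_add (pX k₀) x (s • u)
    rw [map_smul_eq_mul, Real.norm_of_nonneg hs.1] at this
    nlinarith [hs.2, apply_nonneg (pX k₀) u]
  set B := m k * pX (k + d₁) u + pY k (F x)
  have hDF : pY k (DF x u) ≤ c * B := htame x hx k
  have hB : 0 ≤ B := nonneg_of_mul_nonneg_right ((apply_nonneg _ _).trans hDF) hc
  have hexp : Real.exp (c * t) - 1 ≤ t * (c * Real.exp c) := by
    calc Real.exp (c * t) - 1 ≤ c * t * Real.exp (c * t) := exp_sub_one_le_mul_exp _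
      _ ≤ c * t * Real.exp c := by gcongr; exact mul_le_of_le_one_right hc.le ht1.le
      _ = t * (c * Real.exp c) := by ring
  calc pY k (t⁻¹ • (F (x + t • u) - F x) - DF x u)
      ≤ t⁻¹ * pY k (F (x + t • u) - F x) + pY k (DF x u) := by
        refine (map_sub_le_add _ _ _).trans_eq ?_
        rw [map_smul_eq_mul, Real.norm_of_nonneg (by positivity)]
    _ ≤ t⁻¹ * (B * (t * (c * Real.exp c))) + c * B := by
        gcongr
        exact (H.seminorm_map_sub_le hc ht.le hball htame k).trans (by gcongr)
    _ = (c * Real.exp c + c) * B := by field_simp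

lemma tendsto_weightedNorm_slope (H : HasTameRightInverse pX pY k₀ d₁ d₂ R m m' F DF L)
    (hx : pX k₀ x < R) {β : ℕ → ℝ≥0} (hFx : weightedNorm β pY (F x) ≠ ∞) {u : X}
    (hu : ∑' k, β k * ENNReal.ofReal (m k * pX (k + d₁) u) ≠ ∞) :
    Tendsto (fun t : ℝ => weightedNorm β pY (t⁻¹ • (F (x + t • u) - F x) - DF x u))
      (𝓝[>] 0) (𝓝 0) := by
  obtain ⟨C, hC₀, hC⟩ := H.exists_slope_bound hx u
  refine tendsto_weightedNorm_zero (fun k => ENNReal.ofReal C *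
      (ENNReal.ofReal (m k * pX (k + d₁) u) + ENNReal.ofReal (pY k (F x)))) ?_ ?_
    fun k => (H.gateaux x hx u k).mono_left (nhdsGT_le_nhdsNE 0)
  · simp only [mul_left_comm _ (ENNReal.ofReal C), mul_add, ENNReal.tsum_mul_left,
      ENNReal.tsum_add]
    exact ENNReal.add_ne_top.2 ⟨ENNReal.mul_ne_top ENNReal.ofReal_ne_top hu,
      ENNReal.mul_ne_top ENNReal.ofReal_ne_top hFx⟩
  · filter_upwards [hC] with t ht k
    refine (ENNReal.ofReal_le_ofReal (ht k)).trans ?_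
    rw [ENNReal.ofReal_mul hC₀]
    gcongr
    exact ENNReal.ofReal_add_le

lemma tsum_mul_ofReal_rightInverse_ne_top (H : HasTameRightInverse pX pY k₀ d₁ d₂ R m m' F DF L)
    (hx : pX k₀ x < R) {β : ℕ → ℝ≥0}
    (hβ : ∀ c : ℝ≥0, ∑' k, β k * (ENNReal.ofReal (m k * m' (k + d₁)) * c ^ k) ≠ ∞)
    {v : Y} {c₀ : ℝ} (hc₀ : 0 < c₀) (hv : ∀ k, pY k v ≤ c₀ ^ k) :
    ∑' k, β k * ENNReal.ofReal (m k * pX (k + d₁) (L x v)) ≠ ∞ := by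
  have hterm (k : ℕ) : β k * ENNReal.ofReal (m k * pX (k + d₁) (L x v)) ≤
      ENNReal.ofReal (c₀ ^ (d₁ + d₂)) *
        (β k * (ENNReal.ofReal (m k * m' (k + d₁)) * c₀.toNNReal ^ k)) := by
    have hL : pX (k + d₁) (L x v) ≤ m' (k + d₁) * (c₀ ^ k * c₀ ^ (d₁ + d₂)) := by
      rw [← pow_add, ← add_assoc]
      exact (H.bound x hx v _).trans (mul_le_mul_of_nonneg_left (hv _) (H.pos _).le)
    calc β k * ENNReal.ofReal (m k * pX (k + d₁) (L x v))
        ≤ β k * (ENNReal.ofReal (m k) *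
            ENNReal.ofReal (m' (k + d₁) * (c₀ ^ k * c₀ ^ (d₁ + d₂)))) := by
          rw [ENNReal.ofReal_mul' (apply_nonneg _ _)]
          gcongr
      _ = _ := by
          rw [ENNReal.ofReal_mul' (H.pos _).le, ENNReal.ofReal_mul (H.pos _).le,
            ENNReal.ofReal_mul (by positivity), ENNReal.ofReal_pow hc₀.le]
          simp only [ENNReal.ofReal]
          ring
  refine ne_top_of_le_ne_top ?_ (ENNReal.tsum_le_tsum hterm)
  rw [ENNReal.tsum_mul_left]
  exact ENNReal.mul_ne_top ENNReal.ofReal_ne_top (hβ _)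

lemma weightedNorm_rightInverse_le (H : HasTameRightInverse pX pY k₀ d₁ d₂ R m m' F DF L)
    (hx : pX k₀ x < R) {α β : ℕ → ℝ≥0} {ε : ℝ≥0}
    (hα : ∀ k, α k * (m' k).toNNReal ≤ ε * β (k + d₂)) (v : Y) :
    weightedNorm α pX (L x v) ≤ ε * weightedNorm β pY v := by
  have hterm (k : ℕ) : α k * ENNReal.ofReal (pX k (L x v)) ≤
      ε * (β (k + d₂) * ENNReal.ofReal (pY (k + d₂) v)) := by
    calc α k * ENNReal.ofReal (pX k (L x v))
        ≤ α k * ((m' k).toNNReal * ENNReal.ofReal (pY (k + d₂) v)) := by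
          gcongr
          exact (ENNReal.ofReal_le_ofReal (H.bound x hx v k)).trans_eq
            (ENNReal.ofReal_mul (H.pos k).le)
      _ ≤ ε * (β (k + d₂) * ENNReal.ofReal (pY (k + d₂) v)) := by
          rw [← mul_assoc, ← mul_assoc]
          exact mul_le_mul_left (by exact_mod_cast hα k) _
  calc weightedNorm α pX (L x v)
      ≤ ∑' k, ε * (β (k + d₂) * ENNReal.ofReal (pY (k + d₂) v)) := ENNReal.tsum_le_tsum hterm
    _ = ε * ∑' k, β (k + d₂) * ENNReal.ofReal (pY (k + d₂) v) := ENNReal.tsum_mul_left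
    _ ≤ ε * weightedNorm β pY v := by
        gcongr
        exact ENNReal.tsum_comp_le_tsum_of_injective (add_left_injective d₂) _

end HasTameRightInverse

end TameRightInverse

section Descent

variable {X Y : Type*} [AddCommGroup X] [Module ℝ X] [AddCommGroup Y] [Module ℝ Y]
  {pX : ℕ → Seminorm ℝ X} {pY : ℕ → Seminorm ℝ Y} {k₀ d₁ d₂ : ℕ} {R : ℝ} {m m' : ℕ → ℝ}
  {F : X → Y} {DF : X → X → Y} {L : X → Y → X} {x : X} {α β : ℕ → ℝ≥0} {ε : ℝ≥0}

namespace HasTameRightInverse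

lemma exists_approx_preimage (H : HasTameRightInverse pX pY k₀ d₁ d₂ R m m' F DF L)
    (hpY : IsStandard pY) (hx : pX k₀ x < R)
    (hα : ∀ k, α k * (m' k).toNNReal ≤ ε * β (k + d₂))
    (hβ : ∀ c : ℝ≥0, ∑' k, β k * (ENNReal.ofReal (m k * m' (k + d₁)) * c ^ k) ≠ ∞)
    {v : Y} (hv : weightedNorm β pY v ≠ ∞) {δ : ℝ≥0∞} (hδ : δ ≠ 0) :
    ∃ u, weightedNorm β pY (DF x u - v) < δ ∧
      weightedNorm α pX u ≤ ε * (weightedNorm β pY v + δ) ∧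
      ∑' k, β k * ENNReal.ofReal (m k * pX (k + d₁) u) ≠ ∞ := by
  obtain ⟨v', hv', c₀, hc₀, hgeom⟩ := hpY.exists_weightedNorm_sub_lt hv hδ
  refine ⟨L x v', by rwa [H.right_inverse x hx], (H.weightedNorm_rightInverse_le hx hα v').trans ?_,
    H.tsum_mul_ofReal_rightInverse_ne_top hx hβ hc₀ hgeom⟩
  gcongr
  calc weightedNorm β pY v' ≤ weightedNorm β pY v + weightedNorm β pY (v' - v) := by
        simpa using weightedNorm_add_le (w := β) (p := pY) v (v' - v)
    _ ≤ weightedNorm β pY v + δ := by gcongr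

end HasTameRightInverse

lemma weightedNorm_map_add_smul_sub_le {t : ℝ} (ht : 0 < t) (ht1 : t ≤ 1) (u : X) (y v : Y) :
    weightedNorm β pY (F (x + t • u) - y) ≤ ENNReal.ofReal (1 - t) * weightedNorm β pY (F x - y) +
      ENNReal.ofReal t * (weightedNorm β pY (t⁻¹ • (F (x + t • u) - F x) - v) +
        weightedNorm β pY (v - (y - F x))) := by
  have hsplit : F (x + t • u) - y = (1 - t) • (F x - y) +
      t • ((t⁻¹ • (F (x + t • u) - F x) - v) + (v - (y - F x))) := by
    rw [sub_add_sub_cancel, smul_sub t, smul_inv_smul₀ ht.ne']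
    module
  rw [hsplit]
  refine (weightedNorm_add_le _ _).trans ?_
  rw [weightedNorm_smul, weightedNorm_smul, abs_of_nonneg (sub_nonneg.2 ht1), abs_of_pos ht]
  gcongr
  exact weightedNorm_add_le _ _

theorem HasTameRightInverse.exists_newton_step
    (H : HasTameRightInverse pX pY k₀ d₁ d₂ R m m' F DF L)
    (hpY : IsStandard pY) (hx : pX k₀ x < R)
    (hα : ∀ k, α k * (m' k).toNNReal ≤ ε * β (k + d₂))
    (hβ : ∀ c : ℝ≥0, ∑' k, β k * (ENNReal.ofReal (m k * m' (k + d₁)) * c ^ k) ≠ ∞)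
    {y : Y} (hy : weightedNorm β pY y ≠ ∞) (hxy : weightedNorm β pY (F x - y) ≠ ∞)
    {δ : ℝ≥0∞} (hδ : δ ≠ 0) :
    ∃ (t : ℝ) (z : X), 0 < t ∧ t < 1 ∧
      weightedNorm β pY (F z - y) ≤
        ENNReal.ofReal (1 - t) * weightedNorm β pY (F x - y) + ENNReal.ofReal t * (2 * δ) ∧
      weightedNorm α pX (z - x) ≤
        ENNReal.ofReal t * (ε * (weightedNorm β pY (F x - y) + δ)) := by
  have hFx : weightedNorm β pY (F x) ≠ ∞ := by
    refine ne_top_of_le_ne_top (ENNReal.add_ne_top.2 ⟨hxy, hy⟩) ?_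
    simpa using weightedNorm_add_le (w := β) (p := pY) (F x - y) y
  rw [weightedNorm_sub_rev] at hxy
  obtain ⟨u, hDFu, hu, hu_fin⟩ := H.exists_approx_preimage hpY hx hα hβ hxy hδ
  obtain ⟨t, hslope, ht, ht1⟩ :=
    (((H.tendsto_weightedNorm_slope hx hFx hu_fin).eventually_lt_const hδ.bot_lt).and
      (Ioo_mem_nhdsGT zero_lt_one)).exists
  refine ⟨t, x + t • u, ht, ht1, ?_, ?_⟩
  · refine (weightedNorm_map_add_smul_sub_le ht ht1.le u y (DF x u)).trans ?_
    rw [two_mul]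
    gcongr
  · rw [add_sub_cancel_left, weightedNorm_smul, abs_of_pos ht, weightedNorm_sub_rev (F x) y]
    gcongr

theorem HasTameRightInverse.exists_descent
    (H : HasTameRightInverse pX pY k₀ d₁ d₂ R m m' F DF L)
    (hpY : IsStandard pY) (hx : pX k₀ x < R) (hε : ε < 1)
    (hα : ∀ k, α k * (m' k).toNNReal ≤ ε * β (k + d₂))
    (hβ : ∀ c : ℝ≥0, ∑' k, β k * (ENNReal.ofReal (m k * m' (k + d₁)) * c ^ k) ≠ ∞)
    {y : Y} (hy : weightedNorm β pY y ≠ ∞) (hxy : weightedNorm β pY (F x - y) ≠ ∞)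
    (hxy₀ : weightedNorm β pY (F x - y) ≠ 0) :
    ∃ z, weightedNorm β pY (F z - y) + weightedNorm α pX (z - x) ≤ weightedNorm β pY (F x - y) ∧
      weightedNorm β pY (F z - y) < weightedNorm β pY (F x - y) := by
  set S := weightedNorm β pY (F x - y)
  set η : ℝ := (1 - ε) / 4 with hη
  have hε' : (ε : ℝ) < 1 := hε
  have hη₀ : 0 < η := by linarith
  have hcoef : 2 * η + ε * (1 + η) ≤ 1 := by nlinarith
  have hδ : ENNReal.ofReal η * S ≠ 0 := mul_ne_zero (by simpa using hη₀) hxy₀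
  obtain ⟨t, z, ht, ht1, hβz, hαz⟩ := H.exists_newton_step hpY hx hα hβ hy hxy hδ
  have hβz' : weightedNorm β pY (F z - y) ≤ ENNReal.ofReal (1 - t + t * (2 * η)) * S := by
    refine hβz.trans_eq ?_
    rw [ENNReal.ofReal_add (by linarith) (by positivity), ENNReal.ofReal_mul ht.le,
      ENNReal.ofReal_mul two_pos.le, ENNReal.ofReal_ofNat]
    ring
  have hαz' : weightedNorm α pX (z - x) ≤ ENNReal.ofReal (t * (ε * (1 + η))) * S := by
    refine hαz.trans_eq ?_
    rw [ENNReal.ofReal_mul ht.le, ENNReal.ofReal_mul ε.coe_nonneg, ENNReal.ofReal_coe_nnreal,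
      ENNReal.ofReal_add one_pos.le hη₀.le, ENNReal.ofReal_one]
    ring
  refine ⟨z, ?_, hβz'.trans_lt ?_⟩
  · refine (add_le_add hβz' hαz').trans ?_
    rw [← add_mul, ← ENNReal.ofReal_add (by nlinarith) (by positivity)]
    refine mul_le_of_le_one_left' (ENNReal.ofReal_le_one.2 ?_)
    nlinarith
  · refine (ENNReal.mul_lt_mul_left hxy₀ hxy (ENNReal.ofReal_lt_one.2 ?_)).trans_eq (one_mul S)
    nlinarith

end Descent

section Solve

variable {X Y : Type*} [AddCommGroup X] [Module ℝ X] [AddCommGroup Y] [Module ℝ Y]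
  {pX : ℕ → Seminorm ℝ X} {pY : ℕ → Seminorm ℝ Y} {k₀ d₁ d₂ : ℕ} {R : ℝ} {m m' : ℕ → ℝ}
  {F : X → Y} {DF : X → X → Y} {L : X → Y → X} {x₀ : X} {y : Y}

theorem HasTameRightInverse.exists_solution_weightedNorm_sub_le
    (H : HasTameRightInverse pX pY k₀ d₁ d₂ R m m' F DF L)
    (hpX : IsSeqComplete pX) (hpY : IsStandard pY) {α β : ℕ → ℝ≥0} {ε : ℝ≥0} (hε : ε < 1)
    (hα₀ : ∀ k, 0 < α k) (hα : ∀ k, α k * (m' k).toNNReal ≤ ε * β (k + d₂))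
    (hβ₀ : ∀ k, 0 < β k)
    (hβ : ∀ c : ℝ≥0, ∑' k, β k * (ENNReal.ofReal (m k * m' (k + d₁)) * c ^ k) ≠ ∞)
    (hy : weightedNorm β pY y ≠ ∞) (hx₀y : weightedNorm β pY (F x₀ - y) ≠ ∞)
    (hball : ∀ z, weightedNorm α pX (z - x₀) ≤ weightedNorm β pY (F x₀ - y) → pX k₀ z < R) :
    ∃ x, weightedNorm α pX (x - x₀) ≤ weightedNorm β pY (F x₀ - y) ∧ ∀ k, pY k (F x - y) = 0 := by
  have hlsc : ∀ (u : ℕ → X) (x : X) (r : ℝ≥0∞),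
      (∀ n, weightedNorm β pY (F (u n) - y) + weightedNorm α pX (u n - x₀) ≤
        weightedNorm β pY (F x₀ - y)) →
      ConvergesTo pX u x → (∀ᶠ n in atTop, weightedNorm β pY (F (u n) - y) ≤ r) →
      weightedNorm β pY (F x - y) ≤ r := by
    intro u x r hu hux hr
    have hu' := fun n => le_add_self.trans (hu n)
    have hx : pX k₀ x < R :=
      hball x (weightedNorm_le_of_tendsto (hux.tendsto_sub x₀) (.of_forall hu'))
    have hFu := H.continuous x hx u (fun n => hball _ (hu' n)) hux
    exact weightedNorm_le_of_tendsto (hFu.tendsto_sub y) hr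
  obtain ⟨x, hxx₀, hmin⟩ := exists_ekeland_point
    (f := fun z => weightedNorm β pY (F z - y)) hpX hα₀ hx₀y hlsc
  have hx := le_add_self.trans hxx₀
  refine ⟨x, hx, fun k => seminorm_eq_zero_of_weightedNorm_eq_zero hβ₀ ?_ k⟩
  by_contra hxy₀
  obtain ⟨z, hz, hlt⟩ := H.exists_descent hpY (hball x hx) hε hα hβ hy
    (ne_top_of_le_ne_top hx₀y (le_self_add.trans hxx₀)) hxy₀
  exact hlt.not_ge (hmin z hz)

theorem HasTameRightInverse.exists_solution_seminorm_sub_lt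
    (H : HasTameRightInverse pX pY k₀ d₁ d₂ R m m' F DF L)
    (hpX : IsSeqComplete pX) (hpY : IsStandard pY) {ρ : ℝ}
    (hρ : m' k₀ * pY (k₀ + d₂) (F x₀ - y) < ρ) (hR : pX k₀ x₀ + ρ ≤ R) :
    ∃ x, pX k₀ (x - x₀) < ρ ∧ ∀ k, pY k (F x - y) = 0 := by
  have hm₀ := H.pos k₀
  have hρ₀ : 0 < ρ := (mul_nonneg hm₀.le (apply_nonneg _ _)).trans_lt hρ
  obtain ⟨A, hA, hAρ⟩ := exists_between ((lt_div_iff₀' hm₀).2 hρ)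
  have hA₀ : 0 < A := (apply_nonneg _ _).trans_lt hA
  obtain ⟨β, hβ₀, hβ_one, hβv, hβy, hβ⟩ := exists_pos_weightedNorm_lt pY (k₀ + d₂) (F x₀ - y) y
    (b := fun k => ENNReal.ofReal (m k * m' (k + d₁))) (fun _ => ENNReal.ofReal_ne_top) hA
  set ε : ℝ≥0 := (A * m' k₀ / ρ).toNNReal
  set α : ℕ → ℝ≥0 := fun k => ε * β (k + d₂) / (m' k).toNNReal
  have hε₀ : 0 < ε := Real.toNNReal_pos.2 (by positivity)
  have hε : ε < 1 := Real.toNNReal_lt_one.2 ((div_lt_one hρ₀).2 ((lt_div_iff₀ hm₀).1 hAρ))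
  have hm (k) : 0 < (m' k).toNNReal := Real.toNNReal_pos.2 (H.pos k)
  have hα₀ (k) : 0 < α k := div_pos (mul_pos hε₀ (hβ₀ _)) (hm k)
  have hAα : A ≤ α k₀ * ρ := by
    calc A = A * 1 := (mul_one A).symm
      _ ≤ A * β (k₀ + d₂) := by gcongr; exact_mod_cast hβ_one
      _ = α k₀ * ρ := by
        simp only [α, ε, NNReal.coe_div, NNReal.coe_mul, Real.coe_toNNReal _ hm₀.le,
          Real.coe_toNNReal (A * m' k₀ / ρ) (by positivity)]
        field_simp
  have hnear : ∀ z, weightedNorm α pX (z - x₀) ≤ weightedNorm β pY (F x₀ - y) →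
      pX k₀ (z - x₀) < ρ := fun z hz =>
    seminorm_lt_of_weightedNorm_lt hAα (hz.trans_lt hβv)
  obtain ⟨x, hx, hxy⟩ := H.exists_solution_weightedNorm_sub_le hpX hpY hε hα₀
    (fun k => (div_mul_cancel₀ _ (hm k).ne').le) hβ₀ hβ hβy hβv.ne_top fun z hz => by
      have := map_add_le_add (pX k₀) (z - x₀) x₀
      rw [sub_add_cancel] at this
      linarith [hnear z hz]
  exact ⟨x, hnear x hx, hxy⟩

end Solve

section Approximation

open Finset

lemma exists_tendsto_map_sum_of_denseRange {G E : Type*} [AddCommGroup G]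
    [NormedAddCommGroup E] {i : G →+ E} (hi : DenseRange i) {y : E} {r : ℝ} (hy : ‖y‖ < r) :
    ∃ (c : ℕ → G) (ρ : ℕ → ℝ), Tendsto (fun n => i (∑ k ∈ range n, c k)) atTop (𝓝 y) ∧
      (∀ n, ‖i (c n)‖ < ρ n) ∧ Summable ρ ∧ ∑' n, ρ n < r := by
  set δ : ℝ := (r - ‖y‖) / 2 with hδ
  have hδ₀ : 0 < δ := by linarith
  obtain ⟨v, hlim, hv, hv₀, hv_lt⟩ := controlled_sum_of_mem_closure (s := i.range) (hi y)
    (b := fun n => δ / 2 / 2 ^ n) fun n => by positivity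
  choose c hc using hv
  have hsum₁ : HasSum (fun n : ℕ => δ / 2 / 2 ^ n) δ := hasSum_geometric_two' δ
  have hsum := hsum₁.add (hasSum_pi_single 0 ‖y‖)
  refine ⟨c, fun n => δ / 2 / 2 ^ n + Pi.single (M := fun _ => ℝ) 0 ‖y‖ n, ?_, fun n => ?_,
    hsum.summable, ?_⟩
  · simpa only [map_sum, hc] using (tendsto_add_atTop_iff_nat 1).1 hlim
  · rcases Nat.eq_zero_or_pos n with rfl | hn
    · have : ‖v 0‖ ≤ ‖y‖ + ‖-v 0 + y‖ := by
        simpa [norm_sub_rev] using norm_sub_le y (-v 0 + y)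
      simpa [hc, add_comm] using this.trans_lt (add_lt_add_right hv₀ _)
    · simpa [hc, hn.ne'] using hv_lt n hn
  · rw [hsum.tsum_eq]
    linarith

variable {X Y : Type*} [AddCommGroup X] [Module ℝ X] [AddCommGroup Y] [Module ℝ Y]
  {pX : ℕ → Seminorm ℝ X} {pY : ℕ → Seminorm ℝ Y} {k₀ d₁ d₂ : ℕ} {R : ℝ} {m m' : ℕ → ℝ}
  {F : X → Y} {DF : X → X → Y} {L : X → Y → X}

theorem HasTameRightInverse.exists_seq_map_eq_sum
    (H : HasTameRightInverse pX pY k₀ d₁ d₂ R m m' F DF L)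
    (hpX : IsSeqComplete pX) (hpY : IsStandard pY) (hF0 : F 0 = 0) {c : ℕ → Y} {ρ : ℕ → ℝ}
    (hc : ∀ n, pY (k₀ + d₂) (c n) < ρ n)
    (hR : ∀ n, m' k₀ * ∑ i ∈ range n, ρ i ≤ R) :
    ∃ u : ℕ → X, (∀ n, pX k₀ (u (n + 1) - u n) < m' k₀ * ρ n) ∧
      (∀ n, pX k₀ (u n) ≤ m' k₀ * ∑ i ∈ range n, ρ i) ∧
      ∀ n k, pY k (F (u n) - ∑ i ∈ range n, c i) = 0 := by
  have hstep : ∀ (n : ℕ) (x : X), pX k₀ x ≤ m' k₀ * ∑ i ∈ range n, ρ i →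
      (∀ k, pY k (F x - ∑ i ∈ range n, c i) = 0) →
      ∃ z, pX k₀ (z - x) < m' k₀ * ρ n ∧ ∀ k, pY k (F z - ∑ i ∈ range (n + 1), c i) = 0 := by
    intro n x hx hFx
    refine H.exists_solution_seminorm_sub_lt hpX hpY (mul_lt_mul_of_pos_left ?_ (H.pos k₀)) ?_
    · refine lt_of_le_of_lt ?_ (hc n)
      rw [sum_range_succ, ← sub_sub]
      simpa [hFx] using map_sub_le_add (pY (k₀ + d₂)) (F x - ∑ i ∈ range n, c i) (c n)
    · have := hR (n + 1)
      rw [sum_range_succ] at this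
      linarith
  choose! s hs_sub hs_map using hstep
  let u : ℕ → X := fun n => Nat.rec 0 s n
  have hu : ∀ n, pX k₀ (u n) ≤ m' k₀ * ∑ i ∈ range n, ρ i ∧
      ∀ k, pY k (F (u n) - ∑ i ∈ range n, c i) = 0 := by
    intro n
    induction n with
    | zero => simp [u, hF0]
    | succ n ih =>
      refine ⟨?_, hs_map n (u n) ih.1 ih.2⟩
      have := map_add_le_add (pX k₀) (s n (u n) - u n) (u n)
      rw [sub_add_cancel] at this
      rw [sum_range_succ]
      linarith [hs_sub n (u n) ih.1 ih.2, ih.1]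
  exact ⟨u, fun n => hs_sub n (u n) (hu n).1 (hu n).2, fun n => (hu n).1, fun n => (hu n).2⟩

theorem stmt10_general (hpX : IsSeqComplete pX) (hpY : IsStandard pY)
    (H : HasTameRightInverse pX pY k₀ d₁ d₂ R m m' F DF L) (hF0 : F 0 = 0)
    {XK YK YK' : Type*} [NormedAddCommGroup XK] [NormedSpace ℝ XK] [CompleteSpace XK]
    [NormedAddCommGroup YK] [NormedSpace ℝ YK] [NormedAddCommGroup YK'] [NormedSpace ℝ YK']
    (iX : X →ₗ[ℝ] XK) (hiX : ∀ x, ‖iX x‖ = pX k₀ x)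
    {l : ℕ} (iY : Y →ₗ[ℝ] YK) (hiY : ∀ v, ‖iY v‖ = pY l v)
    (iY' : Y →ₗ[ℝ] YK') (hiY' : ∀ v, ‖iY' v‖ = pY (k₀ + d₂) v) (hdense : DenseRange iY')
    (j : YK' →L[ℝ] YK) (hj : ∀ v, j (iY' v) = iY v)
    (Fbar : XK → YK) (hFbar : ContinuousOn Fbar (Metric.ball 0 R))
    (hFbar_ext : ∀ x, pX k₀ x < R → Fbar (iX x) = iY (F x)) {y : YK'} (hy : ‖y‖ < R / m' k₀) :
    ∃ x : XK, ‖x‖ < R ∧ Fbar x = j y := by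
  obtain ⟨c, ρ, hlim, hcρ, hρ, hρR⟩ :=
    exists_tendsto_map_sum_of_denseRange (i := iY'.toAddMonoidHom) hdense hy
  simp only [LinearMap.toAddMonoidHom_coe, hiY'] at hlim hcρ
  have hρ₀ : ∀ n, 0 ≤ ρ n := fun n => (apply_nonneg _ _).trans (hcρ n).le
  have hR : m' k₀ * ∑' n, ρ n < R := (lt_div_iff₀' (H.pos k₀)).1 hρR
  have hle : ∀ n, m' k₀ * ∑ i ∈ range n, ρ i ≤ m' k₀ * ∑' n, ρ n := fun n =>
    mul_le_mul_of_nonneg_left (hρ.sum_le_tsum _ fun i _ => hρ₀ i) (H.pos k₀).le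
  obtain ⟨u, hu_sub, hu_le, hu_map⟩ :=
    H.exists_seq_map_eq_sum hpX hpY hF0 hcρ fun n => (hle n).trans hR.le
  have hcauchy : CauchySeq fun n => iX (u n) := by
    refine cauchySeq_of_dist_le_of_summable _ (fun n => ?_) (hρ.mul_left (m' k₀))
    rw [dist_comm, dist_eq_norm, Nat.succ_eq_add_one, ← map_sub, hiX]
    exact (hu_sub n).le
  obtain ⟨x, hx⟩ := cauchySeq_tendsto_of_complete hcauchy
  have hxR : ‖x‖ < R := (le_of_tendsto' hx.norm fun n =>
    (hiX (u n)).trans_le ((hu_le n).trans (hle n))).trans_lt hR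
  have hmap : ∀ n, Fbar (iX (u n)) = j (iY' (∑ k ∈ range n, c k)) := fun n => by
    rw [hFbar_ext _ (((hu_le n).trans (hle n)).trans_lt hR), hj, ← sub_eq_zero, ← map_sub,
      ← norm_eq_zero, hiY, hu_map]
  have hball : Metric.ball 0 R ∈ 𝓝 x := Metric.isOpen_ball.mem_nhds (mem_ball_zero_iff.2 hxR)
  have hFx : Tendsto (fun n => Fbar (iX (u n))) atTop (𝓝 (Fbar x)) :=
    (hFbar.continuousAt hball).tendsto.comp hx
  refine ⟨x, hxR, tendsto_nhds_unique hFx ?_⟩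
  simpa only [hmap, Function.comp_def] using (j.continuous.tendsto y).comp hlim

end Approximation

/-- Corollary cor6: finite regularity. -/
theorem stmt10
    (X Y : Type*) [AddCommGroup X] [Module ℝ X] [AddCommGroup Y] [Module ℝ Y]
    (pX : ℕ → Seminorm ℝ X) (pY : ℕ → Seminorm ℝ Y)
    (hpX : ∀ (k : ℕ) (x : X), pX k x ≤ pX (k+1) x)
    (hpY : ∀ (k : ℕ) (y : Y), pY k y ≤ pY (k+1) y)
    (hXcomplete : ∀ u : ℕ → X,
      (∀ k, ∀ ε > (0:ℝ), ∃ N, ∀ i ≥ N, ∀ j ≥ N, pX k (u i - u j) < ε) →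
      ∃ x : X, ∀ k, Tendsto (fun n => pX k (u n - x)) atTop (𝓝 0))
    (hYstd : ∀ v : Y, ∃ c₃ : ℝ, ∃ vs : ℕ → Y,
      (∀ k, Tendsto (fun n => pY k (vs n - v)) atTop (𝓝 0)) ∧
      (∀ n k, pY k (vs n) ≤ c₃ * pY k v) ∧
      (∀ n, ∃ c₀ : ℝ, 0 < c₀ ∧ ∀ k, pY k (vs n) ≤ c₀ ^ k))
    (k₀ d₁ d₂ : ℕ) (R : ℝ) (hR : 0 < R)
    (m m' : ℕ → ℝ) (hm : ∀ k, 0 < m k) (hm' : ∀ k, 0 < m' k)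
    (hmnd : ∀ k, m k ≤ m (k+1)) (hm'nd : ∀ k, m' k ≤ m' (k+1))
    (F : X → Y) (DF : X → X →ₗ[ℝ] Y) (L : X → Y →ₗ[ℝ] X)
    (hF0 : F 0 = 0)
    (hFcont : ∀ x : X, pX k₀ x < R → ∀ xs : ℕ → X, (∀ j, pX k₀ (xs j) < R) →
      (∀ k, Tendsto (fun j => pX k (xs j - x)) atTop (𝓝 0)) →
      ∀ k, Tendsto (fun j => pY k (F (xs j) - F x)) atTop (𝓝 0))
    (hGateaux : ∀ x : X, pX k₀ x < R → ∀ (u : X) (k : ℕ),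
      Tendsto (fun t : ℝ => pY k (t⁻¹ • (F (x + t • u) - F x) - DF x u)) (𝓝[≠] 0) (𝓝 0))
    (htame : ∀ u : X, ∃ c₁ : ℝ, 0 < c₁ ∧ ∀ x : X, pX k₀ x < R → ∀ k,
      pY k (DF x u) ≤ c₁ * (m k * pX (k + d₁) u + pY k (F x)))
    (hright : ∀ x : X, pX k₀ x < R → ∀ v : Y, DF x (L x v) = v)
    (hLbound : ∀ x : X, pX k₀ x < R → ∀ (v : Y) (k : ℕ),
      pX k (L x v) ≤ m' k * pY (k + d₂) v)
    (XK YK1 YK2 : Type*)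
    [NormedAddCommGroup XK] [NormedSpace ℝ XK] [CompleteSpace XK]
    [NormedAddCommGroup YK1] [NormedSpace ℝ YK1] [CompleteSpace YK1]
    [NormedAddCommGroup YK2] [NormedSpace ℝ YK2] [CompleteSpace YK2]
    (iX : X →ₗ[ℝ] XK) (hiX : ∀ x : X, ‖iX x‖ = pX k₀ x) (hiXdense : DenseRange iX)
    (iY1 : Y →ₗ[ℝ] YK1) (hiY1 : ∀ y : Y, ‖iY1 y‖ = pY (k₀ - d₁) y)
    (iY2 : Y →ₗ[ℝ] YK2) (hiY2 : ∀ y : Y, ‖iY2 y‖ = pY (k₀ + d₂) y)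
    (hiY2dense : DenseRange iY2)
    (j : YK2 →L[ℝ] YK1) (hj : ∀ y : Y, j (iY2 y) = iY1 y)
    (Fbar : XK → YK1) (hFbarc : Continuous Fbar)
    (hFbarext : ∀ x : X, Fbar (iX x) = iY1 (F x))
    (y : YK2) (hy : ‖y‖ < R / m' k₀) :
    ∃ x : XK, ‖x‖ < R ∧ Fbar x = j y :=
  stmt10_general hXcomplete hYstd (DF := fun x => DF x) (L := fun x => L x)
    ⟨hFcont, hGateaux, htame, hright, hm', hLbound⟩ hF0 iX hiX iY1 hiY1 iY2 hiY2 hiY2dense j hj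
    Fbar hFbarc.continuousOn (fun x _ => hFbarext x) hy
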